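/- arXiv:math/0511137 — 2 statements merged into one kernel-verified Lean document; each statement's English description precedes it below -/
import Mathlib

section
/- Kolmogorov's theorem: Let X be a nonempty set and let K : X × X → ℂ be positive definite. Then there exists a complex Hilbert space H_K and a map v_K : X → H_K such that the linear span of {v_K(x) : x ∈ X} is dense in H_K and ⟨v_K(x), v_K(y)⟩ = K(x,y) for all x, y ∈ X. Moreover, (H_K, v_K) is unique up to unitary isomorphism: if (H, v) and (H', v') are two such pairs, then there exists a unitary operator W : H → H' with W(v(x)) = v'(x) for all x ∈ X. -/
open scoped InnerProductSpace ComplexOrder Classical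
open Complex

noncomputable section

/-- A kernel `K : X × X → ℂ` is positive definite if every finite quadratic form
`∑ i j, K (x i) (x j) * ξ i * conj (ξ j)` is a nonnegative real number
(expressed via the partial order on `ℂ`). -/
def IsPosDefKernel {X : Type*} (K : X → X → ℂ) : Prop :=
  ∀ (n : ℕ) (x : Fin n → X) (ξ : Fin n → ℂ),
    0 ≤ ∑ i, ∑ j, K (x i) (x j) * ξ i * (starRingEnd ℂ) (ξ j)

/-- `(H, v)` is a Kolmogorov representation of the kernel `K`: the span of the range of `v`
is dense and inner products of the `v x` reproduce `K`.  Mathlib's inner product is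
conjugate-linear in the first variable, while the paper's is conjugate-linear in the second,
so the paper's `⟨v x, v y⟩ = K x y` reads `⟪v y, v x⟫_ℂ = K x y` here. -/
def IsKolmogorovRep {X : Type*} (K : X → X → ℂ) (H : Type*) [NormedAddCommGroup H]
    [InnerProductSpace ℂ H] (v : X → H) : Prop :=
  Dense (↑(Submodule.span ℂ (Set.range v)) : Set H) ∧
    ∀ x y : X, ⟪v y, v x⟫_ℂ = K x y

/-- `L² ≤ c K K'` in the sense of Dutkay. -/
def KernelSqLE {X : Type*} (L K K' : X → X → ℂ) (c : ℝ) : Prop :=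
  ∀ (m n : ℕ) (x : Fin m → X) (y : Fin n → X) (ξ : Fin m → ℂ) (η : Fin n → ℂ),
    ‖∑ i, ∑ j, L (x i) (y j) * ξ i * (starRingEnd ℂ) (η j)‖ ^ 2 ≤
      c * (∑ i, ∑ i', K (x i) (x i') * ξ i * (starRingEnd ℂ) (ξ i')).re *
        (∑ j, ∑ j', K' (y j) (y j') * η j * (starRingEnd ℂ) (η j')).re

/-- `K' ≤ c K` for kernels, via the partial order on `ℂ`. -/
def KernelLE {X : Type*} (K' K : X → X → ℂ) (c : ℝ) : Prop :=
  ∀ (n : ℕ) (x : Fin n → X) (ξ : Fin n → ℂ),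
    ∑ i, ∑ j, K' (x i) (x j) * ξ i * (starRingEnd ℂ) (ξ j) ≤
      (c : ℂ) * ∑ i, ∑ j, K (x i) (x j) * ξ i * (starRingEnd ℂ) (ξ j)

/-- A bounded operator is positive if `⟨S v, v⟩ ≥ 0` for all `v` (paper convention;
in Mathlib's convention this is `0 ≤ ⟪v, S v⟫`). -/
def IsPositiveOp {H : Type*} [NormedAddCommGroup H] [InnerProductSpace ℂ H]
    (S : H →L[ℂ] H) : Prop :=
  ∀ v : H, 0 ≤ ⟪v, S v⟫_ℂ

/-- A family of vectors is a normalized tight frame. -/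
def IsNormalizedTightFrame {H : Type*} [NormedAddCommGroup H] [InnerProductSpace ℂ H]
    {ι : Type*} (v : ι → H) : Prop :=
  ∀ f : H, ∑' i, ‖⟪v i, f⟫_ℂ‖ ^ 2 = ‖f‖ ^ 2

/-- `P` is the orthogonal projection onto the set `S`: idempotent, self-adjoint,
with range `S`. -/
def IsOrthProjectionOnto {H : Type*} [NormedAddCommGroup H] [InnerProductSpace ℂ H]
    (P : H →L[ℂ] H) (S : Set H) : Prop :=
  (∀ v, P (P v) = P v) ∧ (∀ v w : H, ⟪P v, w⟫_ℂ = ⟪v, P w⟫_ℂ) ∧ Set.range P = S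

/-- The two covariance relations for a Gabor-type kernel on `ℤ²`. -/
def GaborCovariant (lam : ℂ) (K : ℤ × ℤ → ℤ × ℤ → ℂ) : Prop :=
  (∀ m n m' n' : ℤ, K (m + 1, n) (m' + 1, n') = K (m, n) (m', n')) ∧
  (∀ m n m' n' : ℤ, K (m, n + 1) (m', n' + 1) = lam ^ (m - m') * K (m, n) (m', n'))

/-- The vectors `U^m V^n ξ₀` of a Gabor type unitary system. -/
def gaborVec {H : Type*} [NormedAddCommGroup H] [InnerProductSpace ℂ H] [CompleteSpace H]
    (U V : unitary (H →L[ℂ] H)) (ξ₀ : H) (p : ℤ × ℤ) : H :=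
  ((U ^ p.1 * V ^ p.2 : unitary (H →L[ℂ] H)) : H →L[ℂ] H) ξ₀

/-- `(H, U, V, ξ₀)` is the Gabor type cyclic system associated to the kernel `K` and the
unimodular scalar `lam` : `U V = lam V U`, the vectors `U^m V^n ξ₀` span a dense subspace,
and their inner products reproduce `K`. -/
def IsGaborSystem {H : Type*} [NormedAddCommGroup H] [InnerProductSpace ℂ H] [CompleteSpace H]
    (lam : ℂ) (K : ℤ × ℤ → ℤ × ℤ → ℂ) (U V : unitary (H →L[ℂ] H)) (ξ₀ : H) : Prop :=
  ((U : H →L[ℂ] H) * (V : H →L[ℂ] H) = lam • ((V : H →L[ℂ] H) * (U : H →L[ℂ] H))) ∧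
  Dense (↑(Submodule.span ℂ (Set.range (gaborVec U V ξ₀))) : Set H) ∧
  ∀ m n m' n' : ℤ,
    ⟪gaborVec U V ξ₀ (m', n'), gaborVec U V ξ₀ (m, n)⟫_ℂ = K (m, n) (m', n')

universe u

lemma posDef_finset {X : Type*} {K : X → X → ℂ} (hK : IsPosDefKernel K) (s : Finset X)
    (ξ : X → ℂ) : 0 ≤ ∑ i ∈ s, ∑ j ∈ s, K i j * ξ i * (starRingEnd ℂ) (ξ j) := by
  have h := hK s.card (fun i => (s.equivFin.symm i : X)) (fun i => ξ (s.equivFin.symm i))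
  have e : ∀ f : X → ℂ, ∑ i, f (s.equivFin.symm i : X) = ∑ i ∈ s, f i := fun f => by
    rw [← Finset.sum_coe_sort s f]
    exact s.equivFin.symm.sum_comp (fun i : s => f i)
  rw [← e]
  simp_rw [← e]
  exact h

lemma posDef_symm {X : Type*} {K : X → X → ℂ} (hK : IsPosDefKernel K) (x y : X) :
    (starRingEnd ℂ) (K x y) = K y x := by
  have hx := hK 1 ![x] ![1]
  have hy := hK 1 ![y] ![1]
  have h1 := hK 2 ![x, y] ![1, 1]
  have h2 := hK 2 ![x, y] ![I, 1]
  simp [Fin.sum_univ_two, Complex.le_def] at hx hy h1 h2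
  apply Complex.ext
  · simp; linarith [h2.2]
  · simp; linarith [h1.2]

/-- Operator-valued matrix of a kernel. -/
def opKernel {X : Type*} (K : X → X → ℂ) : Matrix X X (ℂ →L[ℂ] ℂ) :=
  .of fun x y => K y x • ContinuousLinearMap.id ℂ ℂ

lemma opKernel_posSemidef {X : Type*} {K : X → X → ℂ} (hK : IsPosDefKernel K) :
    (opKernel K).PosSemidef := by
  have tf := (RKHS.posSemidef_tfae (K := opKernel K)).out 0 2
  rw [tf]
  refine ⟨?_, fun w => ?_⟩
  · ext x y
    simp [opKernel, Matrix.conjTranspose_apply, ← posDef_symm hK x y]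
    simp [show star (ContinuousLinearMap.id ℂ ℂ) = ContinuousLinearMap.id ℂ ℂ from
      star_one (ℂ →L[ℂ] ℂ)]
  · have h := (Complex.le_def.1 (posDef_finset hK w.support w)).1
    rw [← Complex.conj_re] at h
    simp only [Finsupp.sum, opKernel]
    refine h.trans_eq ?_
    simp only [map_sum, RCLike.re_to_complex]
    rw [← Complex.conj_re]
    simp only [map_sum, Complex.re_sum]
    refine Finset.sum_congr rfl fun i _ => Finset.sum_congr rfl fun j _ => ?_
    simp [RCLike.inner_apply]
    ring

/-- **Kolmogorov's theorem.** Every positive definite kernel on a nonempty set admits a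
Kolmogorov representation, unique up to a unitary isomorphism. -/
theorem kolmogorov_theorem {X : Type u} [Nonempty X] (K : X → X → ℂ)
    (hK : IsPosDefKernel K) :
    (∃ (H : Type u) (_ : NormedAddCommGroup H) (_ : InnerProductSpace ℂ H)
        (_ : CompleteSpace H) (v : X → H), IsKolmogorovRep K H v) ∧
    (∀ (H : Type*) (_ : NormedAddCommGroup H) (_ : InnerProductSpace ℂ H)
        (_ : CompleteSpace H) (v : X → H)
        (H' : Type*) (_ : NormedAddCommGroup H') (_ : InnerProductSpace ℂ H')
        (_ : CompleteSpace H') (v' : X → H'),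
        IsKolmogorovRep K H v → IsKolmogorovRep K H' v' →
          ∃ W : H ≃ₗᵢ[ℂ] H', ∀ x : X, W (v x) = v' x) := by
  constructor
  · have : Fact (opKernel K).PosSemidef := ⟨opKernel_posSemidef hK⟩
    refine ⟨RKHS.OfKernel (opKernel K), inferInstance, inferInstance, inferInstance,
      fun x => RKHS.kerFun (RKHS.OfKernel (opKernel K)) x (1 : ℂ), ?_, fun x y => ?_⟩
    · rw [Submodule.dense_iff_topologicalClosure_eq_top, eq_top_iff,
        ← RKHS.kerFun_dense (𝕜 := ℂ) (X := X) (V := ℂ) (RKHS.OfKernel (opKernel K))]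
      apply Submodule.topologicalClosure_mono
      rw [Submodule.span_le]
      rintro _ ⟨x, c, rfl⟩
      have : RKHS.kerFun (RKHS.OfKernel (opKernel K)) x c =
          c • RKHS.kerFun (RKHS.OfKernel (opKernel K)) x (1 : ℂ) := by
        rw [← map_smul]; simp
      rw [this]
      exact Submodule.smul_mem _ _ (Submodule.subset_span ⟨x, rfl⟩)
    · rw [← RKHS.kernel_inner, RKHS.OfKernel.kernel_ofKernel]
      simp [opKernel, posDef_symm hK]
  · intro H _ _ _ v H' _ _ _ v' ⟨hd, hv⟩ ⟨hd', hv'⟩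
    have key : ∀ f : X →₀ ℂ, ‖Finsupp.linearCombination ℂ v' f‖ =
        ‖Finsupp.linearCombination ℂ v f‖ := by
      intro f
      rw [@norm_eq_sqrt_re_inner ℂ, @norm_eq_sqrt_re_inner ℂ]
      simp [Finsupp.linearCombination_apply, Finsupp.sum, sum_inner, inner_sum, inner_smul_left,
        inner_smul_right, hv, hv', -inner_self_eq_norm_sq_to_K]
    have dr1 : DenseRange (Finsupp.linearCombination ℂ v) := by
      rw [← Finsupp.range_linearCombination] at hd
      exact hd
    have dr2 : DenseRange (Finsupp.linearCombination ℂ v') := by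
      rw [← Finsupp.range_linearCombination] at hd'
      exact hd'
    refine ⟨(LinearEquiv.refl ℂ (X →₀ ℂ)).extendOfIsometry (Finsupp.linearCombination ℂ v)
      (Finsupp.linearCombination ℂ v') dr1 dr2 key, fun x => ?_⟩
    have := LinearEquiv.extendOfIsometry_eq (LinearEquiv.refl ℂ (X →₀ ℂ))
      (Finsupp.linearCombination ℂ v) (Finsupp.linearCombination ℂ v') dr1 dr2 key
      (Finsupp.single x 1)
    simpa using this
end
end

section
/- Let X be a nonempty set, let K, K' be positive definite maps on X with Kolmogorov representations (H_K, v_K) and (H_{K'}, v_{K'}), let L : X × X → ℂ, and suppose L² ≤ c K K' for some c > 0. Then there exists a unique bounded linear operator S : H_K → H_{K'} such that ⟨S v_K(x), v_{K'}(y)⟩ = L(x,y) for all x, y ∈ X, and moreover ‖S‖ ≤ √c. Conversely, if S : H_K → H_{K'} is any bounded linear operator, then there is a unique map L : X × X → ℂ satisfying ⟨S v_K(x), v_{K'}(y)⟩ = L(x,y) for all x, y ∈ X, and this L satisfies L² ≤ ‖S‖² K K'. -/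
open scoped InnerProductSpace ComplexOrder Classical
open Complex

noncomputable section

lemma finsupp_eq_fin_sum {X : Type*} (a : X →₀ ℂ) :
    ∃ (n : ℕ) (x : Fin n → X) (ξ : Fin n → ℂ), a = ∑ i, Finsupp.single (x i) (ξ i) := by
  refine ⟨a.support.card, fun i => (a.support.equivFin.symm i : X),
    fun i => a (a.support.equivFin.symm i), ?_⟩
  rw [Equiv.sum_comp a.support.equivFin.symm
    (fun z : a.support => (Finsupp.single (z : X) (a z) : X →₀ ℂ)),
    Finset.sum_coe_sort a.support (fun z : X => (Finsupp.single z (a z) : X →₀ ℂ))]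
  exact (Finsupp.sum_single a).symm

lemma inner_fin_sums {X : Type*} {G : Type*} [NormedAddCommGroup G] [InnerProductSpace ℂ G]
    (w u : X → G) (L : X → X → ℂ) (h : ∀ x y, ⟪u y, w x⟫_ℂ = L x y)
    {m n : ℕ} (x : Fin m → X) (y : Fin n → X) (ξ : Fin m → ℂ) (η : Fin n → ℂ) :
    ∑ i, ∑ j, L (x i) (y j) * ξ i * (starRingEnd ℂ) (η j) =
      ⟪∑ j, η j • u (y j), ∑ i, ξ i • w (x i)⟫_ℂ := by
  rw [inner_sum]
  refine Finset.sum_congr rfl fun i _ => ?_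
  rw [sum_inner]
  refine Finset.sum_congr rfl fun j _ => ?_
  rw [inner_smul_left, inner_smul_right, h]
  ring

lemma rep_re {X : Type*} {K : X → X → ℂ} {G : Type*} [NormedAddCommGroup G]
    [InnerProductSpace ℂ G] {v : X → G} (h : IsKolmogorovRep K G v)
    {m : ℕ} (x : Fin m → X) (ξ : Fin m → ℂ) :
    (∑ i, ∑ j, K (x i) (x j) * ξ i * (starRingEnd ℂ) (ξ j)).re = ‖∑ i, ξ i • v (x i)‖ ^ 2 := by
  rw [inner_fin_sums v v K h.2, inner_self_eq_norm_sq_to_K]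
  norm_cast

lemma rep_denseRange {X : Type*} {K : X → X → ℂ} {G : Type*} [NormedAddCommGroup G]
    [InnerProductSpace ℂ G] {v : X → G} (h : IsKolmogorovRep K G v) :
    DenseRange (Finsupp.linearCombination ℂ v) := by
  have := h.1
  rw [← Finsupp.range_linearCombination] at this
  rwa [LinearMap.coe_range] at this

lemma lc_fin_sum {X : Type*} {G : Type*} [AddCommGroup G] [Module ℂ G] (v : X → G)
    {m : ℕ} (x : Fin m → X) (ξ : Fin m → ℂ) :
    Finsupp.linearCombination ℂ v (∑ i, Finsupp.single (x i) (ξ i)) = ∑ i, ξ i • v (x i) := by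
  simp [map_sum, Finsupp.linearCombination_single]

lemma lc_bound {X : Type*} {K K' L : X → X → ℂ}
    {H : Type*} [NormedAddCommGroup H] [InnerProductSpace ℂ H]
    {H' : Type*} [NormedAddCommGroup H'] [InnerProductSpace ℂ H']
    {v : X → H} {v' : X → H'}
    (hrep : IsKolmogorovRep K H v) (hrep' : IsKolmogorovRep K' H' v')
    {c : ℝ} (hc : 0 < c) (hL : KernelSqLE L K K' c)
    (w : X → H') (hw : ∀ x y, ⟪v' y, w x⟫_ℂ = L x y) (a : X →₀ ℂ) :
    ‖Finsupp.linearCombination ℂ w a‖ ≤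
      Real.sqrt c * ‖Finsupp.linearCombination ℂ v a‖ := by
  obtain ⟨m, x, ξ, rfl⟩ := finsupp_eq_fin_sum a
  rw [lc_fin_sum, lc_fin_sum]
  set p := ∑ i, ξ i • w (x i) with hp
  set q := ∑ i, ξ i • v (x i) with hq
  have key : ∀ z : H', ‖⟪z, p⟫_ℂ‖ ≤ Real.sqrt c * ‖q‖ * ‖z‖ := by
    intro z
    refine (rep_denseRange hrep').induction_on (p := fun z => ‖⟪z, p⟫_ℂ‖ ≤ Real.sqrt c * ‖q‖ * ‖z‖)
      z (isClosed_le (by fun_prop) (by fun_prop)) ?_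
    intro b
    obtain ⟨n, y, η, rfl⟩ := finsupp_eq_fin_sum b
    rw [lc_fin_sum]
    have h := hL m n x y ξ η
    rw [inner_fin_sums w v' L hw, rep_re hrep, rep_re hrep', ← hp, ← hq] at h
    refine le_of_sq_le_sq ?_ (by positivity)
    rw [mul_pow, mul_pow, Real.sq_sqrt hc.le]
    exact h
  have h := key p
  rw [inner_self_eq_norm_sq_to_K] at h
  have h2 : ‖p‖ * ‖p‖ ≤ Real.sqrt c * ‖q‖ * ‖p‖ := by
    simpa [sq] using h
  rcases (norm_nonneg p).eq_or_lt with h0 | h0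
  · rw [← h0]; positivity
  · exact le_of_mul_le_mul_right h2 h0

lemma exists_riesz {X : Type*} {K K' L : X → X → ℂ}
    {H : Type*} [NormedAddCommGroup H] [InnerProductSpace ℂ H]
    {H' : Type*} [NormedAddCommGroup H'] [InnerProductSpace ℂ H'] [CompleteSpace H']
    {v : X → H} {v' : X → H'}
    (hrep : IsKolmogorovRep K H v) (hrep' : IsKolmogorovRep K' H' v')
    {c : ℝ} (hc : 0 < c) (hL : KernelSqLE L K K' c) (x : X) :
    ∃ w : H', ∀ y, ⟪v' y, w⟫_ℂ = L x y := by
  let f : (X →₀ ℂ) →ₗ[ℂ] ℂ := Finsupp.linearCombination ℂ (fun y => (starRingEnd ℂ) (L x y))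
  let T := Finsupp.linearCombination ℂ v'
  have hb : ∀ b, ‖f b‖ ≤ (Real.sqrt c * ‖v x‖) * ‖T b‖ := by
    intro b
    obtain ⟨n, y, η, rfl⟩ := finsupp_eq_fin_sum b
    have h := hL 1 n (fun _ => x) y (fun _ => 1) η
    rw [rep_re hrep, rep_re hrep'] at h
    simp only [f, T, lc_fin_sum]
    refine le_of_sq_le_sq ?_ (by positivity)
    rw [mul_pow, mul_pow, Real.sq_sqrt hc.le]
    have e : ‖∑ j, η j • (starRingEnd ℂ) (L x (y j))‖ =
        ‖∑ i : Fin 1, ∑ j, L x (y j) * 1 * (starRingEnd ℂ) (η j)‖ := by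
      rw [← RCLike.norm_conj]
      simp [map_sum, mul_comm]
    rw [e]
    simpa using h
  refine ⟨(InnerProductSpace.toDual ℂ H').symm (f.extendOfNorm T), fun y => ?_⟩
  rw [← inner_conj_symm, InnerProductSpace.toDual_symm_apply]
  have e := LinearMap.extendOfNorm_eq (f := f) (rep_denseRange hrep') ⟨_, hb⟩ (Finsupp.single y 1)
  simp only [T, f, Finsupp.linearCombination_single, one_smul] at e ⊢
  rw [e]; simp

/-- Existence and uniqueness of the intertwining operator associated to a bounded bikernel
`L` with `L² ≤ c K K'`, together with the converse. -/
theorem intertwining_operator {X : Type*} [Nonempty X] (K K' : X → X → ℂ)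
    (hK : IsPosDefKernel K) (hK' : IsPosDefKernel K')
    {H : Type*} [NormedAddCommGroup H] [InnerProductSpace ℂ H] [CompleteSpace H]
    {H' : Type*} [NormedAddCommGroup H'] [InnerProductSpace ℂ H'] [CompleteSpace H']
    (v : X → H) (v' : X → H')
    (hrep : IsKolmogorovRep K H v) (hrep' : IsKolmogorovRep K' H' v') :
    (∀ (L : X → X → ℂ) (c : ℝ), 0 < c → KernelSqLE L K K' c →
      (∃! S : H →L[ℂ] H', ∀ x y : X, ⟪v' y, S (v x)⟫_ℂ = L x y) ∧
      (∀ S : H →L[ℂ] H', (∀ x y : X, ⟪v' y, S (v x)⟫_ℂ = L x y) → ‖S‖ ≤ Real.sqrt c)) ∧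
    (∀ S : H →L[ℂ] H',
      (∃! L : X → X → ℂ, ∀ x y : X, ⟪v' y, S (v x)⟫_ℂ = L x y) ∧
      (∀ L : X → X → ℂ, (∀ x y : X, ⟪v' y, S (v x)⟫_ℂ = L x y) →
        KernelSqLE L K K' (‖S‖ ^ 2))) := by
  have hT := rep_denseRange hrep
  have hT' := rep_denseRange hrep'
  refine ⟨fun L c hc hL => ⟨?_, ?_⟩, fun S => ⟨⟨fun x y => ⟪v' y, S (v x)⟫_ℂ, fun _ _ => rfl, ?_⟩, ?_⟩⟩
  · choose w hw using exists_riesz hrep hrep' hc hL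
    have hb := lc_bound hrep hrep' hc hL w hw
    refine ⟨(Finsupp.linearCombination ℂ w).extendOfNorm (Finsupp.linearCombination ℂ v),
      fun x y => ?_, fun S hS => ?_⟩
    · have e := LinearMap.extendOfNorm_eq (f := Finsupp.linearCombination ℂ w) hT ⟨_, hb⟩
        (Finsupp.single x 1)
      simp only [Finsupp.linearCombination_single, one_smul] at e
      rw [e, hw]
    · have hSw : ∀ x, S (v x) = w x := by
        intro x
        refine hrep'.1.eq_of_inner_right (𝕜 := ℂ) fun z hz => ?_
        induction hz using Submodule.span_induction with
        | mem z hz => obtain ⟨y, rfl⟩ := hz; rw [hS, hw]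
        | zero => simp
        | add a b _ _ ha hb => rw [inner_add_left, inner_add_left, ha, hb]
        | smul r a _ ha => rw [inner_smul_left, inner_smul_left, ha]
      refine ContinuousLinearMap.ext_on hrep.1 ?_
      rintro _ ⟨x, rfl⟩
      have e := LinearMap.extendOfNorm_eq (f := Finsupp.linearCombination ℂ w) hT ⟨_, hb⟩
        (Finsupp.single x 1)
      simp only [Finsupp.linearCombination_single, one_smul] at e
      rw [e, hSw]
  · intro S hS
    have hb := lc_bound hrep hrep' hc hL (fun x => S (v x)) hS
    refine S.opNorm_le_bound (Real.sqrt_nonneg c) fun z => ?_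
    refine hT.induction_on (p := fun z => ‖S z‖ ≤ Real.sqrt c * ‖z‖)
      z (isClosed_le (by fun_prop) (by fun_prop)) fun a => ?_
    have e : S (Finsupp.linearCombination ℂ v a) =
        Finsupp.linearCombination ℂ (fun x => S (v x)) a := by
      simp [Finsupp.linearCombination_apply, Finsupp.sum, map_sum]
    rw [e]
    exact hb a
  · intro L hL
    funext x y
    exact (hL x y).symm
  · intro L hL m n x y ξ η
    rw [inner_fin_sums (fun x => S (v x)) v' L hL, rep_re hrep, rep_re hrep', ← mul_pow, ← mul_pow]
    have e : ∑ i, ξ i • S (v (x i)) = S (∑ i, ξ i • v (x i)) := by simp [map_sum]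
    rw [e]
    refine pow_le_pow_left₀ (norm_nonneg _) ?_ 2
    refine (norm_inner_le_norm _ _).trans ?_
    rw [mul_comm]
    exact mul_le_mul_of_nonneg_right (S.le_opNorm _) (norm_nonneg _)
end
end
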